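/- Let B be a bivector in ℝ_{p,q,r} with effective dimension 2k and effective pseudoscalar W_k. Then: (1) for every vector v, writing w := B × v, one has W_k ∧ w = 0; and (2) the square W_k² is a real scalar, i.e. W_k² ∈ ℝ. -/

import Mathlib

/-! Common setup: the real geometric algebra `ℝ_{p,q,r}`, grade projections `⟨·⟩_ℓ`,
the commutator product `×`, the wedge powers `W_j`, the outer exponential and outer
trigonometric functions, the characteristic polynomial data `M_μ`, and the
complexification `ℂ ⊗ ℝ_{p,q,r}`. -/

noncomputable section

open CliffordAlgebra TensorProduct

/-- The diagonal quadratic form of signature `(p,q,r)` on `ℝⁿ`, `n = p+q+r`: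
`p` basis vectors of square `+1`, `q` of square `-1`, `r` of square `0`.
`ℝ_{p,q,r} := CliffordAlgebra (sigQ p q r)`. -/
def sigQ (p q r : ℕ) : QuadraticForm ℝ (Fin (p + q + r) → ℝ) :=
  QuadraticMap.weightedSumSquares ℝ
    (fun i : Fin (p + q + r) => if (i : ℕ) < p then (1 : ℝ) else if (i : ℕ) < p + q then -1 else 0)

variable {K : Type*} [Field K] [CharZero K] {M : Type*} [AddCommGroup M] [Module K M]

/-- The grade-`ℓ` component `⟨x⟩_ℓ` of an element of a Clifford algebra, obtained by
transporting the grading of the exterior algebra along `CliffordAlgebra.equivExterior`. -/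
def gradeProj (Q : QuadraticForm K M) (ℓ : ℕ) (x : CliffordAlgebra Q) : CliffordAlgebra Q :=
  letI : Invertible (2 : K) := invertibleOfNonzero two_ne_zero
  (equivExterior Q).symm
    (DirectSum.decompose (fun n : ℕ => ⋀[K]^n M) (equivExterior Q x) ℓ : ExteriorAlgebra K M)

/-- `x` is homogeneous of grade `ℓ`; in particular `IsGrade Q 2 B` says `B` is a bivector. -/
def IsGrade (Q : QuadraticForm K M) (ℓ : ℕ) (x : CliffordAlgebra Q) : Prop :=
  gradeProj Q ℓ x = x

/-- The commutator product `x × y := (xy - yx)/2`. -/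
def cprod {Q : QuadraticForm K M} (x y : CliffordAlgebra Q) : CliffordAlgebra Q :=
  (2 : K)⁻¹ • (x * y - y * x)

/-- `W_j := (1/j!) ⟨B^j⟩_{2j}`, the normalized `j`-fold wedge power of `B`. -/
def Wj (Q : QuadraticForm K M) (B : CliffordAlgebra Q) (j : ℕ) : CliffordAlgebra Q :=
  ((j.factorial : K)⁻¹) • gradeProj Q (2 * j) (B ^ j)

/-- `B` has effective dimension `2k`: `k` is the largest integer with `W_k ≠ 0`. -/
def HasEffDim (Q : QuadraticForm K M) (B : CliffordAlgebra Q) (k : ℕ) : Prop :=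
  Wj Q B k ≠ 0 ∧ ∀ j, k < j → Wj Q B j = 0

/-- The outer exponential `Λ^B = Σ_{j≥0} W_j`; `n` is any bound beyond which all the `W_j`
vanish (e.g. the dimension of the underlying space), so the sum is complete. -/
def outerExp (Q : QuadraticForm K M) (n : ℕ) (B : CliffordAlgebra Q) : CliffordAlgebra Q :=
  ∑ j ∈ Finset.range (n + 1), Wj Q B j

/-- The outer cosine `co∧(B) := (Λ^B + Λ^{-B})/2`. -/
def coW (Q : QuadraticForm K M) (n : ℕ) (B : CliffordAlgebra Q) : CliffordAlgebra Q :=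
  (2 : K)⁻¹ • (outerExp Q n B + outerExp Q n (-B))

/-- The outer sine `si∧(B) := (Λ^B - Λ^{-B})/2`. -/
def siW (Q : QuadraticForm K M) (n : ℕ) (B : CliffordAlgebra Q) : CliffordAlgebra Q :=
  (2 : K)⁻¹ • (outerExp Q n B - outerExp Q n (-B))

/-- `M_μ := Σ_{j=0}^k (-μ)^{k-j} W_j`; the characteristic polynomial of `B` is
`P_{2k}(μ) = M_μ * reverse M_μ`. -/
def Mpoly (Q : QuadraticForm K M) (B : CliffordAlgebra Q) (k : ℕ) (μ : K) : CliffordAlgebra Q :=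
  ∑ j ∈ Finset.range (k + 1), (-μ) ^ (k - j) • Wj Q B j

/-- The wedge (outer) product, `X ∧ Y := ⟨XY⟩_{i+j}` on homogeneous elements of grades `i`, `j`,
extended bilinearly; `n` bounds the occurring grades. -/
def wedgeProd (Q : QuadraticForm K M) (n : ℕ) (x y : CliffordAlgebra Q) : CliffordAlgebra Q :=
  ∑ i ∈ Finset.range (n + 1), ∑ j ∈ Finset.range (n + 1),
    gradeProj Q (i + j) (gradeProj Q i x * gradeProj Q j y)

/-- The dot product of two vectors, `u · v = ⟨uv⟩₀ = polar(Q)(u,v)/2`, as a scalar. -/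
def vdot (Q : QuadraticForm K M) (u v : M) : K := (2 : K)⁻¹ * QuadraticMap.polar Q u v

/-- The complexified quadratic form of signature `(p,q,r)`. -/
def sigQc (p q r : ℕ) : QuadraticForm ℂ (ℂ ⊗[ℝ] (Fin (p + q + r) → ℝ)) :=
  letI : Invertible (2 : ℝ) := invertibleOfNonzero two_ne_zero
  (sigQ p q r).baseChange ℂ

/-- The canonical embedding of `ℝ_{p,q,r}` into its complexification `ℂ ⊗ ℝ_{p,q,r}`. -/
def toC (p q r : ℕ) (x : CliffordAlgebra (sigQ p q r)) : CliffordAlgebra (sigQc p q r) :=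
  letI : Invertible (2 : ℝ) := invertibleOfNonzero two_ne_zero
  ofBaseChange ℂ (sigQ p q r) ((1 : ℂ) ⊗ₜ x)

/-- `v` is an eigenvector of the bivector `B` with eigenvalue `μ`: `v ≠ 0` and `B × v = μ v`. -/
def IsEigen (Q : QuadraticForm K M) (B : CliffordAlgebra Q) (μ : K) (v : M) : Prop :=
  v ≠ 0 ∧ cprod B (ι Q v) = μ • ι Q v

end

/-!
Identify the Clifford algebra with the exterior algebra, and let `b` be the bivector `B` there, so
that `W_k = b ^ k / k!` and `b ^ (k + 1) = 0`. Contracting the latter with a covector `d` gives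
`(k + 1) (d⌋b) ∧ b ^ k = 0`, so every vector of the form `d⌋b` annihilates `W_k`. One of these is
`B × v`, being the contraction of `b` with the covector `-(v · _)`; hence the first claim.

If `w ∧ X = 0`, then `(w ∧ y) X = (w · _)⌋(y X)` for all `y`: left multiplication of `X` by a wedge
product of annihilating vectors acts as iterated contraction, each factor lowering the grade by one.
Now `b` is itself a sum of wedge products of vectors of the form `d⌋b`, so `W_k` is a sum of
products of `2k` of them, and `W_k * W_k` has grade `2k - 2k = 0`.
-/

namespace GeometricAlgebra

open CliffordAlgebra Filter

local infixl:70 "⌋" => contractLeft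

section Contraction

variable {R M : Type*} [CommRing R] [AddCommGroup M] [Module R M] {Q : QuadraticForm R M}

theorem involute_contractLeft (d : Module.Dual R M) (x : CliffordAlgebra Q) :
    involute (d⌋x) = -(d⌋involute x) := by
  induction x using CliffordAlgebra.left_induction with
  | algebraMap r => simp
  | add x y hx hy => simp only [map_add, hx, hy, neg_add]
  | ι_mul x m hx => simp [contractLeft_ι_mul, hx]

theorem contractLeft_mul (d : Module.Dual R M) (x y : CliffordAlgebra Q) :
    d⌋(x * y) = (d⌋x) * y + involute x * (d⌋y) := by
  induction x using CliffordAlgebra.left_induction with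
  | algebraMap r => simp [contractLeft_algebraMap_mul]
  | add x x' hx hx' => simp only [add_mul, map_add, hx, hx']; abel
  | ι_mul x m hx =>
    simp only [mul_assoc, contractLeft_ι_mul, hx, map_mul, involute_ι, smul_mul_assoc, sub_mul,
      mul_add, neg_mul]
    abel

theorem ι_mul_sub_involute_mul_ι (w : M) (x : CliffordAlgebra Q) :
    ι Q w * x - involute x * ι Q w = Q.polarBilin w⌋x := by
  induction x using CliffordAlgebra.left_induction with
  | algebraMap r => simp [Algebra.commutes]
  | add x y hx hy => rw [mul_add, map_add, map_add, ← hx, ← hy, add_mul]; abel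
  | ι_mul x m hx =>
    rw [contractLeft_ι_mul, ← hx, QuadraticMap.polarBilin_apply_apply, Algebra.smul_def,
      ← ι_mul_ι_add_swap, map_mul, involute_ι]
    noncomm_ring

theorem changeForm_involute {Q' : QuadraticForm R M} {β : LinearMap.BilinForm R M}
    (h : β.toQuadraticMap = Q' - Q) (x : CliffordAlgebra Q) :
    changeForm h (involute x) = involute (changeForm h x) := by
  induction x using CliffordAlgebra.left_induction with
  | algebraMap r => simp
  | add x y hx hy => simp only [map_add, hx, hy]
  | ι_mul x m hx =>
    simp only [map_mul, involute_ι, neg_mul, map_neg, map_sub, changeForm_ι_mul, hx,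
      involute_contractLeft]
    abel

end Contraction

section ExteriorPower

variable {R M : Type*} [CommRing R] [AddCommGroup M] [Module R M]

theorem mem_even_of_mem_exteriorPower {n : ℕ} (hn : Even n) {x : ExteriorAlgebra R M}
    (hx : x ∈ ⋀[R]^n M) : x ∈ evenOdd (0 : QuadraticForm R M) 0 :=
  Submodule.mem_iSup_of_mem ⟨n, (ZMod.natCast_eq_zero_iff_even).2 hn⟩ hx

theorem commute_of_mem_even {x : ExteriorAlgebra R M}
    (hx : x ∈ evenOdd (0 : QuadraticForm R M) 0) (y : ExteriorAlgebra R M) : Commute x y := by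
  induction y using ExteriorAlgebra.induction with
  | algebraMap r => exact Algebra.commute_algebraMap_right r x
  | ι m =>
    have hpolar : (0 : QuadraticForm R M).polarBilin m = 0 := by
      ext v; simp [QuadraticMap.polar]
    have h := ι_mul_sub_involute_mul_ι m x
    rw [involute_eq_of_mem_even hx, hpolar, map_zero, LinearMap.zero_apply] at h
    exact (sub_eq_zero.1 h).symm
  | mul y z hy hz => exact hy.mul_right hz
  | add y z hy hz => exact hy.add_right hz

theorem contractLeft_pow_succ (d : Module.Dual R M) {x : ExteriorAlgebra R M}
    (hx : x ∈ evenOdd (0 : QuadraticForm R M) 0) (k : ℕ) :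
    d⌋(x ^ (k + 1)) = (k + 1) • ((d⌋x) * x ^ k) := by
  induction k with
  | zero => simp
  | succ k ih =>
    rw [pow_succ', contractLeft_mul, ih, involute_eq_of_mem_even hx, mul_smul_comm, ← mul_assoc,
      (commute_of_mem_even hx _).eq, mul_assoc, ← pow_succ', succ_nsmul' _ (k + 1)]

theorem mem_exteriorPower_zero {x : ExteriorAlgebra R M} :
    x ∈ ⋀[R]^0 M ↔ ∃ r, algebraMap R (ExteriorAlgebra R M) r = x := by
  rw [ExteriorAlgebra.exteriorPower, pow_zero, Submodule.mem_one]

theorem mem_exteriorPower_one {x : ExteriorAlgebra R M} :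
    x ∈ ⋀[R]^1 M ↔ ∃ m, ExteriorAlgebra.ι R m = x := by
  rw [ExteriorAlgebra.exteriorPower, pow_one, LinearMap.mem_range]

theorem ι_mul_mem_exteriorPower (m : M) {n : ℕ} {x : ExteriorAlgebra R M} (hx : x ∈ ⋀[R]^n M) :
    ExteriorAlgebra.ι R m * x ∈ ⋀[R]^(n + 1) M :=
  add_comm 1 n ▸ SetLike.mul_mem_graded (mem_exteriorPower_one.2 ⟨m, rfl⟩) hx

theorem contractLeft_eq_zero_of_mem_exteriorPower_zero (d : Module.Dual R M)
    {x : ExteriorAlgebra R M} (hx : x ∈ ⋀[R]^0 M) : d⌋x = 0 := by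
  obtain ⟨r, rfl⟩ := mem_exteriorPower_zero.1 hx
  exact contractLeft_algebraMap 0 d r

theorem contractLeft_mem_exteriorPower (d : Module.Dual R M) {n : ℕ} {x : ExteriorAlgebra R M}
    (hx : x ∈ ⋀[R]^(n + 1) M) : d⌋x ∈ ⋀[R]^n M := by
  suffices ∀ m n (x : ExteriorAlgebra R M), x ∈ ⋀[R]^m M → m = n + 1 → d⌋x ∈ ⋀[R]^n M from
    this _ n x hx rfl
  intro m n x hx
  induction hx using Submodule.pow_induction_on_left' generalizing n with
  | algebraMap r => simp
  | add x y i _ _ ihx ihy =>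
    exact fun h ↦ map_add (contractLeft d) x y ▸ add_mem (ihx n h) (ihy n h)
  | mem_mul v hv i x hx ih =>
    obtain ⟨m, rfl⟩ := hv
    intro h
    obtain rfl : i = n := by omega
    rw [contractLeft_ι_mul]
    refine sub_mem (Submodule.smul_mem _ _ hx) ?_
    cases i with
    | zero => simp [contractLeft_eq_zero_of_mem_exteriorPower_zero d hx]
    | succ i => exact ι_mul_mem_exteriorPower m (ih i rfl)

/-- The grade-`n` component of the exterior algebra, as an endomorphism of the whole algebra; it
computes `gradeProj` after transport along `equivExterior`. -/
abbrev exteriorProj (n : ℕ) : ExteriorAlgebra R M →ₗ[R] ExteriorAlgebra R M :=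
  GradedAlgebra.proj (fun i : ℕ ↦ ⋀[R]^i M) n

theorem exteriorProj_of_mem {n : ℕ} {x : ExteriorAlgebra R M} (hx : x ∈ ⋀[R]^n M) :
    exteriorProj n x = x :=
  DirectSum.decompose_of_mem_same (fun i : ℕ ↦ ⋀[R]^i M) hx

theorem exteriorProj_of_mem_ne {m n : ℕ} {x : ExteriorAlgebra R M} (hx : x ∈ ⋀[R]^m M)
    (hmn : m ≠ n) : exteriorProj n x = 0 :=
  DirectSum.decompose_of_mem_ne (fun i : ℕ ↦ ⋀[R]^i M) hx hmn

theorem exteriorProj_mul_of_left_mem {m : ℕ} {x : ExteriorAlgebra R M} (hx : x ∈ ⋀[R]^m M) (n : ℕ)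
    (y : ExteriorAlgebra R M) : exteriorProj (m + n) (x * y) = x * exteriorProj n y :=
  DirectSum.coe_decompose_mul_add_of_left_mem (fun i : ℕ ↦ ⋀[R]^i M) hx

theorem exteriorProj_ι_mul (n : ℕ) (m : M) (x : ExteriorAlgebra R M) :
    exteriorProj (n + 1) (ExteriorAlgebra.ι R m * x) = ExteriorAlgebra.ι R m * exteriorProj n x :=
  add_comm 1 n ▸ exteriorProj_mul_of_left_mem (mem_exteriorPower_one.2 ⟨m, rfl⟩) n x

theorem exteriorProj_contractLeft (n : ℕ) (d : Module.Dual R M) (x : ExteriorAlgebra R M) :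
    exteriorProj n (d⌋x) = d⌋exteriorProj (n + 1) x := by
  induction x using DirectSum.Decomposition.inductionOn (fun i : ℕ ↦ ⋀[R]^i M) with
  | zero => simp only [map_zero]
  | add x y hx hy => simp only [map_add, hx, hy]
  | @homogeneous i x =>
    obtain ⟨x, hx⟩ := x
    by_cases hi : i = n + 1
    · subst hi
      rw [exteriorProj_of_mem hx, exteriorProj_of_mem (contractLeft_mem_exteriorPower d hx)]
    · rw [exteriorProj_of_mem_ne hx hi, map_zero]
      cases i with
      | zero => rw [contractLeft_eq_zero_of_mem_exteriorPower_zero d hx, map_zero]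
      | succ i => exact exteriorProj_of_mem_ne (contractLeft_mem_exteriorPower d hx) (by omega)

theorem contractLeft_map {N : Type*} [AddCommGroup N] [Module R N] (f : M →ₗ[R] N)
    (d : Module.Dual R N) (x : ExteriorAlgebra R M) :
    d⌋ExteriorAlgebra.map f x = ExteriorAlgebra.map f ((d ∘ₗ f)⌋x) := by
  induction x using CliffordAlgebra.left_induction with
  | algebraMap r => simp
  | add x y hx hy => simp only [map_add, hx, hy]
  | ι_mul x m hx =>
    rw [contractLeft_ι_mul, map_sub, map_smul, map_mul, map_mul (ExteriorAlgebra.map f),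
      ExteriorAlgebra.map_apply_ι, contractLeft_ι_mul, hx, LinearMap.comp_apply]

/-- Euler's identity. Each `x` involves only finitely many basis vectors, so the possibly infinite
sum is encoded as the eventual value of its finite partial sums. -/
theorem eventually_sum_ι_mul_contractLeft {I : Type*} (e : Module.Basis I R M) {n : ℕ}
    {x : ExteriorAlgebra R M} (hx : x ∈ ⋀[R]^n M) :
    ∀ᶠ s : Finset I in atTop, ∑ i ∈ s, ExteriorAlgebra.ι R (e i) * (e.coord i⌋x) = n • x := by
  induction hx using Submodule.pow_induction_on_left' with
  | algebraMap r => simp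
  | add x y n _ _ hx hy =>
    filter_upwards [hx, hy] with s hxs hys
    simp only [map_add, mul_add, Finset.sum_add_distrib, hxs, hys, smul_add]
  | mem_mul v hv n x _ hx =>
    obtain ⟨m, rfl⟩ := hv
    filter_upwards [hx, eventually_ge_atTop (e.repr m).support] with s hxs hs
    have hm : ∑ i ∈ s, e.coord i m • ExteriorAlgebra.ι R (e i) = ExteriorAlgebra.ι R m := by
      simp only [← map_smul, ← map_sum]
      congr 1
      exact (Finsupp.sum_of_support_subset _ hs _ (by simp)).symm.trans
        (e.linearCombination_repr m)
    have hterm (i : I) : ExteriorAlgebra.ι R (e i) * (e.coord i⌋(ExteriorAlgebra.ι R m * x)) =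
        e.coord i m • ExteriorAlgebra.ι R (e i) * x +
          ExteriorAlgebra.ι R m * (ExteriorAlgebra.ι R (e i) * (e.coord i⌋x)) := by
      rw [contractLeft_ι_mul, mul_sub, mul_smul_comm, smul_mul_assoc, ← mul_assoc, ← mul_assoc,
        eq_neg_of_add_eq_zero_left (ExteriorAlgebra.ι_add_mul_swap (e i) m), neg_mul,
        sub_neg_eq_add]
    simp only [hterm, Finset.sum_add_distrib, ← Finset.sum_mul, ← Finset.mul_sum, hm, hxs]
    rw [mul_smul_comm, Nat.succ_eq_add_one, succ_nsmul']

theorem map_mem_map_ι_range_pow {N : Type*} [AddCommGroup N] [Module R N] (f : M →ₗ[R] N) {n : ℕ}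
    {x : ExteriorAlgebra R M} (hx : x ∈ ⋀[R]^n M) :
    ExteriorAlgebra.map f x ∈ (LinearMap.range f).map (ExteriorAlgebra.ι R) ^ n := by
  rw [← LinearMap.range_comp, ← ExteriorAlgebra.map_comp_ι, LinearMap.range_comp,
    ← Submodule.map_pow]
  exact Submodule.mem_map_of_mem hx

/-- The vectors `d⌋b` cut out of the bivector `b` by covectors `d`; over a field of characteristic
zero this is the smallest subspace `S` with `b ∈ ⋀²S`. -/
def bivectorSupport (b : ExteriorAlgebra R M) : Submodule R M :=
  (LinearMap.range ((contractLeft (Q := (0 : QuadraticForm R M))).flip b)).comap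
    (ExteriorAlgebra.ι R)

theorem exists_mem_bivectorSupport (d : Module.Dual R M) {b : ExteriorAlgebra R M}
    (hb : b ∈ ⋀[R]^2 M) : ∃ w ∈ bivectorSupport b, ExteriorAlgebra.ι R w = d⌋b := by
  obtain ⟨w, hw⟩ := mem_exteriorPower_one.1 (contractLeft_mem_exteriorPower d hb)
  exact ⟨w, ⟨d, hw.symm⟩, hw⟩

end ExteriorPower

section Support

variable {K M : Type*} [Field K] [CharZero K] [AddCommGroup M] [Module K M]

theorem contractLeft_mul_pow_eq_zero (d : Module.Dual K M) {x : ExteriorAlgebra K M}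
    (hx : x ∈ evenOdd (0 : QuadraticForm K M) 0) {k : ℕ} (hk : x ^ (k + 1) = 0) :
    (d⌋x) * x ^ k = 0 := by
  have h := contractLeft_pow_succ d hx k
  rw [hk, map_zero, ← Nat.cast_smul_eq_nsmul K] at h
  exact (smul_eq_zero.1 h.symm).resolve_left (Nat.cast_ne_zero.2 k.succ_ne_zero)

theorem eq_zero_of_forall_contractLeft_eq_zero {n : ℕ} {x : ExteriorAlgebra K M}
    (hx : x ∈ ⋀[K]^(n + 1) M) (h : ∀ d : Module.Dual K M, d⌋x = 0) : x = 0 := by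
  obtain ⟨s, hs⟩ :=
    (eventually_sum_ι_mul_contractLeft (Module.Basis.ofVectorSpace K M) hx).exists
  simp only [h, mul_zero, Finset.sum_const_zero] at hs
  rw [← Nat.cast_smul_eq_nsmul K] at hs
  exact (smul_eq_zero.1 hs.symm).resolve_left (Nat.cast_ne_zero.2 n.succ_ne_zero)

theorem ι_mul_pow_eq_zero_of_mem_bivectorSupport {b : ExteriorAlgebra K M} (hb : b ∈ ⋀[K]^2 M)
    {k : ℕ} (hk : b ^ (k + 1) = 0) {w : M} (hw : w ∈ bivectorSupport b) :
    ExteriorAlgebra.ι K w * b ^ k = 0 := by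
  obtain ⟨d, hd⟩ := hw
  rw [← hd]
  exact contractLeft_mul_pow_eq_zero d (mem_even_of_mem_exteriorPower even_two hb) hk

theorem contractLeft_eq_zero_of_forall_mem_bivectorSupport {d : Module.Dual K M}
    {b : ExteriorAlgebra K M} (hb : b ∈ ⋀[K]^2 M) (hd : ∀ w ∈ bivectorSupport b, d w = 0) :
    d⌋b = 0 := by
  refine eq_zero_of_forall_contractLeft_eq_zero (contractLeft_mem_exteriorPower d hb) fun d' ↦ ?_
  obtain ⟨w, hw, hwb⟩ := exists_mem_bivectorSupport d' hb
  rw [contractLeft_comm, ← hwb, contractLeft_ι, hd w hw, map_zero, neg_zero]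

theorem map_eq_self_of_forall_mem_bivectorSupport {f : M →ₗ[K] M} {b : ExteriorAlgebra K M}
    (hb : b ∈ ⋀[K]^2 M) (hf : ∀ w ∈ bivectorSupport b, f w = w) : ExteriorAlgebra.map f b = b := by
  have hfb : ExteriorAlgebra.map f b ∈ ⋀[K]^2 M :=
    pow_le_pow_left' LinearMap.map_le_range 2 (map_mem_map_ι_range_pow f hb)
  refine sub_eq_zero.1 (eq_zero_of_forall_contractLeft_eq_zero (sub_mem hfb hb) fun d ↦ ?_)
  have hdf : (d ∘ₗ f)⌋b = d⌋b := by
    rw [← sub_eq_zero, ← LinearMap.sub_apply, ← map_sub]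
    refine contractLeft_eq_zero_of_forall_mem_bivectorSupport hb fun w hw ↦ ?_
    simp [hf w hw]
  obtain ⟨w, hw, hwb⟩ := exists_mem_bivectorSupport d hb
  rw [map_sub, contractLeft_map, hdf, ← hwb, ExteriorAlgebra.map_apply_ι, hf w hw, sub_self]

theorem mem_map_ι_bivectorSupport_sq {b : ExteriorAlgebra K M} (hb : b ∈ ⋀[K]^2 M) :
    b ∈ (bivectorSupport b).map (ExteriorAlgebra.ι K) ^ 2 := by
  obtain ⟨g, hg⟩ := (bivectorSupport b).exists_isCompl
  have h := map_mem_map_ι_range_pow (bivectorSupport b |>.projection g hg) hb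
  rwa [Submodule.range_projection, map_eq_self_of_forall_mem_bivectorSupport hb fun w hw ↦
    Submodule.projection_apply_left hg ⟨w, hw⟩] at h

end Support

section EquivExterior

variable {R M : Type*} [CommRing R] [AddCommGroup M] [Module R M] [Invertible (2 : R)]
  (Q : QuadraticForm R M)

theorem equivExterior_algebraMap (r : R) :
    equivExterior Q (algebraMap R _ r) = algebraMap R _ r :=
  changeForm_algebraMap changeForm.associated_neg_proof r

theorem equivExterior_ι (m : M) : equivExterior Q (ι Q m) = ExteriorAlgebra.ι R m :=
  changeForm_ι changeForm.associated_neg_proof m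

theorem equivExterior_contractLeft (d : Module.Dual R M) (x : CliffordAlgebra Q) :
    equivExterior Q (d⌋x) = d⌋equivExterior Q x :=
  changeForm_contractLeft changeForm.associated_neg_proof d x

theorem equivExterior_involute (x : CliffordAlgebra Q) :
    equivExterior Q (involute x) = involute (equivExterior Q x) :=
  changeForm_involute changeForm.associated_neg_proof x

theorem equivExterior_ι_mul (m : M) (x : CliffordAlgebra Q) :
    equivExterior Q (ι Q m * x) = ExteriorAlgebra.ι R m * equivExterior Q x +
      QuadraticMap.associated Q m⌋equivExterior Q x := by
  have h : equivExterior Q (ι Q m * x) = ExteriorAlgebra.ι R m * equivExterior Q x -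
      QuadraticMap.associated (-Q) m⌋equivExterior Q x :=
    changeForm_ι_mul changeForm.associated_neg_proof m x
  rwa [map_neg, LinearMap.neg_apply, map_neg, LinearMap.neg_apply, sub_neg_eq_add] at h

theorem equivExterior_symm_contractLeft (d : Module.Dual R M) (y : ExteriorAlgebra R M) :
    (equivExterior Q).symm (d⌋y) = d⌋(equivExterior Q).symm y := by
  rw [LinearEquiv.symm_apply_eq, equivExterior_contractLeft, LinearEquiv.apply_symm_apply]

theorem equivExterior_symm_ι_mul (m : M) (y : ExteriorAlgebra R M) :
    (equivExterior Q).symm (ExteriorAlgebra.ι R m * y) =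
      ι Q m * (equivExterior Q).symm y -
        QuadraticMap.associated Q m⌋(equivExterior Q).symm y := by
  rw [LinearEquiv.symm_apply_eq, map_sub, equivExterior_ι_mul, equivExterior_contractLeft,
    LinearEquiv.apply_symm_apply, add_sub_cancel_right]

variable {Q}

theorem equivExterior_symm_ι_mul_mul {w : M} {x : CliffordAlgebra Q}
    (hw : ExteriorAlgebra.ι R w * equivExterior Q x = 0) (y : ExteriorAlgebra R M) :
    (equivExterior Q).symm (ExteriorAlgebra.ι R w * y) * x =
      QuadraticMap.associated Q w⌋((equivExterior Q).symm y * x) := by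
  have hwx : ι Q w * x = QuadraticMap.associated Q w⌋x := by
    rw [← (equivExterior Q).injective.eq_iff, equivExterior_ι_mul, hw, zero_add,
      equivExterior_contractLeft]
  have hpolar := ι_mul_sub_involute_mul_ι w ((equivExterior Q).symm y)
  rw [← QuadraticMap.two_nsmul_associated R, LinearMap.smul_apply, map_nsmul,
    LinearMap.smul_apply, two_nsmul, sub_eq_iff_eq_add] at hpolar
  rw [equivExterior_symm_ι_mul, contractLeft_mul, ← hwx, ← mul_assoc, ← add_mul, hpolar]
  congr 1
  abel

theorem equivExterior_symm_mul_mem_exteriorPower {S : Submodule R M} {i j : ℕ}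
    {x : CliffordAlgebra Q} (hx : equivExterior Q x ∈ ⋀[R]^(i + j) M)
    (hS : ∀ w ∈ S, ExteriorAlgebra.ι R w * equivExterior Q x = 0) {y : ExteriorAlgebra R M}
    (hy : y ∈ S.map (ExteriorAlgebra.ι R) ^ j) :
    equivExterior Q ((equivExterior Q).symm y * x) ∈ ⋀[R]^i M := by
  induction hy using Submodule.pow_induction_on_left' generalizing i with
  | algebraMap r =>
    rw [← equivExterior_algebraMap Q, LinearEquiv.symm_apply_apply, ← Algebra.smul_def, map_smul]
    exact Submodule.smul_mem _ r hx
  | add y z j _ _ hy hz => rw [map_add, add_mul, map_add]; exact add_mem (hy hx) (hz hx)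
  | mem_mul v hv j y _ hy =>
    obtain ⟨w, hw, rfl⟩ := hv
    rw [equivExterior_symm_ι_mul_mul (hS w hw), equivExterior_contractLeft]
    exact contractLeft_mem_exteriorPower _ (hy (by rwa [add_right_comm, add_assoc]))

/-- The corrections to the wedge product contract `x` and so cost two grades, which only components
of `z` above its top grade `n` could make up. -/
theorem exteriorProj_equivExterior_symm_mul {n : ℕ} {z : CliffordAlgebra Q}
    (hz : ∀ l > n, exteriorProj l (equivExterior Q z) = 0) {m : ℕ} {x : ExteriorAlgebra R M}
    (hx : x ∈ ⋀[R]^m M) {l : ℕ} (hl : n ≤ l) :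
    exteriorProj (m + l) (equivExterior Q ((equivExterior Q).symm x * z)) =
      x * exteriorProj l (equivExterior Q z) := by
  induction m using Nat.strong_induction_on generalizing x l with
  | _ m ih =>
  cases m with
  | zero =>
    obtain ⟨r, rfl⟩ := mem_exteriorPower_zero.1 hx
    rw [← equivExterior_algebraMap Q, LinearEquiv.symm_apply_apply, ← Algebra.smul_def,
      equivExterior_algebraMap, ← Algebra.smul_def, map_smul, map_smul, zero_add]
  | succ m =>
    rw [ExteriorAlgebra.exteriorPower, pow_succ'] at hx
    refine Submodule.mul_induction_on hx ?_ fun x y hx hy ↦ by simp only [map_add, add_mul, hx, hy]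
    rintro _ ⟨v, rfl⟩ y hy
    have hvanish : exteriorProj (l + 2) (equivExterior Q z) = 0 := hz _ (by omega)
    have hcontract : exteriorProj (m + 1 + l) (equivExterior Q ((equivExterior Q).symm
        (QuadraticMap.associated Q v⌋y) * z)) = 0 := by
      cases m with
      | zero => simp [contractLeft_eq_zero_of_mem_exteriorPower_zero _ hy]
      | succ m =>
        rw [show m + 1 + 1 + l = m + (l + 2) by omega, ih m (by omega)
          (contractLeft_mem_exteriorPower _ hy) (by omega), hvanish, mul_zero]
    rw [equivExterior_symm_contractLeft] at hcontract
    rw [equivExterior_symm_ι_mul, sub_mul, map_sub, map_sub, hcontract, sub_zero, mul_assoc,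
      equivExterior_ι_mul, map_add, add_right_comm, exteriorProj_ι_mul,
      exteriorProj_contractLeft, ih m m.lt_succ_self hy hl, add_assoc (m + l), add_assoc m,
      ih m m.lt_succ_self hy (by omega), hvanish, mul_zero, map_zero, add_zero, mul_assoc]

theorem exteriorProj_equivExterior_pow {x : CliffordAlgebra Q} {m : ℕ}
    (hx : equivExterior Q x ∈ ⋀[R]^m M) (j : ℕ) {l : ℕ} (hl : j * m ≤ l) :
    exteriorProj l (equivExterior Q (x ^ j)) = exteriorProj l (equivExterior Q x ^ j) := by
  induction j generalizing l with
  | zero => rw [pow_zero, pow_zero, ← map_one (algebraMap R _), equivExterior_algebraMap, map_one]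
  | succ j ih =>
    obtain ⟨l, rfl⟩ := Nat.exists_eq_add_of_le (show m ≤ l by nlinarith)
    have hpow := SetLike.pow_mem_graded j hx
    have h := exteriorProj_equivExterior_symm_mul (n := j * m) (z := x ^ j)
      (fun l hl ↦ by rw [ih hl.le, exteriorProj_of_mem_ne hpow hl.ne]) hx
      (show j * m ≤ l by rw [add_mul] at hl; omega)
    rw [LinearEquiv.symm_apply_apply, ← pow_succ', ih (by rw [add_mul] at hl; omega)] at h
    rw [h, pow_succ', exteriorProj_mul_of_left_mem hx]

theorem involute_eq_self_of_equivExterior_mem {n : ℕ} (hn : Even n) {x : CliffordAlgebra Q}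
    (hx : equivExterior Q x ∈ ⋀[R]^n M) : involute x = x := by
  rw [← (equivExterior Q).injective.eq_iff, equivExterior_involute,
    involute_eq_of_mem_even (mem_even_of_mem_exteriorPower hn hx)]

end EquivExterior

section GradeProj

variable {K M : Type*} [Field K] [CharZero K] [AddCommGroup M] [Module K M] [Invertible (2 : K)]
  {Q : QuadraticForm K M}

theorem equivExterior_gradeProj (n : ℕ) (x : CliffordAlgebra Q) :
    equivExterior Q (gradeProj Q n x) = exteriorProj n (equivExterior Q x) := by
  obtain rfl : ‹Invertible (2 : K)› = invertibleOfNonzero two_ne_zero := Subsingleton.elim _ _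
  exact (equivExterior Q).apply_symm_apply _

theorem isGrade_iff_equivExterior_mem {n : ℕ} {x : CliffordAlgebra Q} :
    IsGrade Q n x ↔ equivExterior Q x ∈ ⋀[K]^n M := by
  rw [IsGrade, ← (equivExterior Q).injective.eq_iff, equivExterior_gradeProj]
  exact ⟨fun h ↦ h ▸ SetLike.coe_mem _, exteriorProj_of_mem⟩

theorem equivExterior_Wj {B : CliffordAlgebra Q} (hB : IsGrade Q 2 B) (j : ℕ) :
    equivExterior Q (Wj Q B j) = (j.factorial : K)⁻¹ • equivExterior Q B ^ j := by
  have hb := isGrade_iff_equivExterior_mem.1 hB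
  rw [Wj, map_smul, equivExterior_gradeProj, exteriorProj_equivExterior_pow hb j (mul_comm j 2).le,
    exteriorProj_of_mem (mul_comm j 2 ▸ SetLike.pow_mem_graded j hb)]

theorem exists_mem_bivectorSupport_cprod_ι {B : CliffordAlgebra Q} (hB : IsGrade Q 2 B) (v : M) :
    ∃ w ∈ bivectorSupport (equivExterior Q B), cprod B (ι Q v) = ι Q w := by
  have hb := isGrade_iff_equivExterior_mem.1 hB
  obtain ⟨w, hw, hwb⟩ := exists_mem_bivectorSupport (QuadraticMap.associated Q v) hb
  refine ⟨-w, neg_mem hw, ?_⟩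
  have hpolar := ι_mul_sub_involute_mul_ι v B
  rw [involute_eq_self_of_equivExterior_mem even_two hb, ← QuadraticMap.two_nsmul_associated K,
    LinearMap.smul_apply, map_nsmul, LinearMap.smul_apply] at hpolar
  have hcontract : QuadraticMap.associated Q v⌋B = ι Q w := by
    rw [← (equivExterior Q).injective.eq_iff, equivExterior_contractLeft, equivExterior_ι, hwb]
  rw [cprod, ← neg_sub, hpolar, hcontract, ← Nat.cast_smul_eq_nsmul K, smul_neg, smul_smul,
    Nat.cast_ofNat, inv_mul_cancel₀ two_ne_zero, one_smul, map_neg]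

theorem gradeProj_succ_mul_ι_eq_zero {n : ℕ} (hn : Even n) {x : CliffordAlgebra Q}
    (hx : IsGrade Q n x) {w : M} (hw : ExteriorAlgebra.ι K w * equivExterior Q x = 0) :
    gradeProj Q (n + 1) (x * ι Q w) = 0 := by
  rw [isGrade_iff_equivExterior_mem] at hx
  have hpolar := ι_mul_sub_involute_mul_ι w x
  rw [involute_eq_self_of_equivExterior_mem hn hx, sub_eq_iff_eq_add', ← sub_eq_iff_eq_add]
    at hpolar
  rw [← (equivExterior Q).injective.eq_iff, equivExterior_gradeProj, ← hpolar, map_sub,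
    equivExterior_ι_mul, hw, zero_add, equivExterior_contractLeft, map_sub,
    exteriorProj_contractLeft, exteriorProj_contractLeft,
    exteriorProj_of_mem_ne hx (by omega), map_zero, map_zero, sub_zero, map_zero]

theorem Wj_eq_zero_iff {B : CliffordAlgebra Q} (hB : IsGrade Q 2 B) {j : ℕ} :
    Wj Q B j = 0 ↔ equivExterior Q B ^ j = 0 := by
  rw [← map_eq_zero_iff _ (equivExterior Q).injective, equivExterior_Wj hB, smul_eq_zero_iff_right
    (inv_ne_zero (Nat.cast_ne_zero.2 j.factorial_ne_zero))]

theorem isGrade_Wj (B : CliffordAlgebra Q) (j : ℕ) : IsGrade Q (2 * j) (Wj Q B j) := by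
  rw [isGrade_iff_equivExterior_mem, Wj, map_smul, equivExterior_gradeProj]
  exact Submodule.smul_mem _ _ (SetLike.coe_mem _)

theorem ι_mul_equivExterior_Wj_eq_zero {B : CliffordAlgebra Q} (hB : IsGrade Q 2 B) {k : ℕ}
    (hk : Wj Q B (k + 1) = 0) {w : M} (hw : w ∈ bivectorSupport (equivExterior Q B)) :
    ExteriorAlgebra.ι K w * equivExterior Q (Wj Q B k) = 0 := by
  rw [equivExterior_Wj hB, mul_smul_comm, ι_mul_pow_eq_zero_of_mem_bivectorSupport
    (isGrade_iff_equivExterior_mem.1 hB) ((Wj_eq_zero_iff hB).1 hk) hw, smul_zero]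

theorem equivExterior_Wj_mem_map_ι_bivectorSupport_pow {B : CliffordAlgebra Q}
    (hB : IsGrade Q 2 B) (j : ℕ) : equivExterior Q (Wj Q B j) ∈
      (bivectorSupport (equivExterior Q B)).map (ExteriorAlgebra.ι K) ^ (2 * j) := by
  have hb := mem_map_ι_bivectorSupport_sq (isGrade_iff_equivExterior_mem.1 hB)
  rw [equivExterior_Wj hB, pow_mul]
  exact Submodule.smul_mem _ _ (Submodule.pow_mem_pow _ hb j)

end GradeProj

end GeometricAlgebra

open CliffordAlgebra GeometricAlgebra in
theorem effPseudoscalar_wedge_and_sq_general {K M : Type*} [Field K] [CharZero K]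
    [AddCommGroup M] [Module K M] (Q : QuadraticForm K M) (B : CliffordAlgebra Q)
    (hB : IsGrade Q 2 B) (k : ℕ) (hk : HasEffDim Q B k) :
    (∀ v : M, gradeProj Q (2 * k + 1) (Wj Q B k * cprod B (ι Q v)) = 0) ∧
    (∃ c : K, Wj Q B k * Wj Q B k = algebraMap K (CliffordAlgebra Q) c) := by
  let : Invertible (2 : K) := invertibleOfNonzero two_ne_zero
  have hkill : ∀ w ∈ bivectorSupport (equivExterior Q B),
      ExteriorAlgebra.ι K w * equivExterior Q (Wj Q B k) = 0 :=
    fun _ ↦ ι_mul_equivExterior_Wj_eq_zero hB (hk.2 _ k.lt_succ_self)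
  refine ⟨fun v ↦ ?_, ?_⟩
  · obtain ⟨w, hw, hBw⟩ := exists_mem_bivectorSupport_cprod_ι hB v
    exact hBw ▸ gradeProj_succ_mul_ι_eq_zero (even_two_mul k) (isGrade_Wj B k) (hkill w hw)
  · have hgrade : equivExterior Q (Wj Q B k) ∈ ⋀[K]^(0 + 2 * k) M := by
      rw [zero_add, ← isGrade_iff_equivExterior_mem]
      exact isGrade_Wj B k
    obtain ⟨c, hc⟩ := mem_exteriorPower_zero.1 <| equivExterior_symm_mul_mem_exteriorPower hgrade
      hkill (equivExterior_Wj_mem_map_ι_bivectorSupport_pow hB k)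
    refine ⟨c, (equivExterior Q).injective ?_⟩
    rw [equivExterior_algebraMap, hc, LinearEquiv.symm_apply_apply]

open CliffordAlgebra in
/-- for a bivector `B` with effective dimension `2k` and effective
pseudoscalar `W_k`: (1) for every vector `v`, with `w := B × v`, one has `W_k ∧ w = 0`;
(2) `W_k²` is a real scalar. -/
theorem effPseudoscalar_wedge_and_sq (p q r : ℕ) (B : CliffordAlgebra (sigQ p q r))
    (hB : IsGrade (sigQ p q r) 2 B) (k : ℕ) (hk : HasEffDim (sigQ p q r) B k) :
    (∀ v : Fin (p + q + r) → ℝ,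
      gradeProj (sigQ p q r) (2 * k + 1)
        (Wj (sigQ p q r) B k * cprod B (ι (sigQ p q r) v)) = 0) ∧
    (∃ c : ℝ, Wj (sigQ p q r) B k * Wj (sigQ p q r) B k
        = algebraMap ℝ (CliffordAlgebra (sigQ p q r)) c) :=
  effPseudoscalar_wedge_and_sq_general (sigQ p q r) B hB k hk
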